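/- Let φ: ℕ → (0,∞) be non-decreasing with φ(n) → ∞ and satisfying φ(n) ≥ n·log φ(n) for all n ≥ 1. Fix t ∈ ℕ and a cylinder I_t = I_t(b_1,…,b_t). Then there exist a constant C > 0 (independent of m, n and of the cylinder) and N ∈ ℕ such that for all m, n ≥ N with n > m + 2, ℒ(A_n(φ) ∩ A_m(φ) ∩ I_t) ≤ C·[ (log φ(n))²/φ(n)² + ( n·(log φ(n))²/φ(n)² + 1/φ(n) )·( m·(log φ(m))²/φ(m)² + 1/φ(m) ) ]·|I_t|. -/

import Mathlib

/-!
The proof rests on quasi-independence of continued fraction digits with an absolute constant.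
Conditioned on a cylinder of rank `j`, the point `T^j x` has a density proportional to
`1 / (1 + s y)²` with `0 ≤ s ≤ 1`: the family is stable under fixing one more digit and applying
the Gauss map (`lintegral_branch`, `cyl_law`). Such a density is at most four times its mean, so
`λ(E ∩ T^{-j} B) ≤ 4 λ(E) λ(B)` for every `E` determined by the first `j` digits (`quasi_indep`).

Write `evt k u` for the event `a_k a_{k+1} ≥ u`. Its probability is `O(log u / u)`
(`lam_evt_one`), while `evt k u ∩ evt (k+1) u` has probability `O(1 / u)` because the two products
share a digit (`lam_evt_one_two`). Relative to a fixed cylinder the same bounds hold with absolute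
constants as soon as `u` is large compared with the digits of the cylinder (`cyl_inter_evt_le`).

With `u = φ n`, `v = φ m`, a point of `A_n ∩ A_m` has some `k < n` with `x ∈ evt k u ∩ evt n u`.
* For `k ≤ m - 2`, the events `evt k u`, `evt m v`, `evt n u` are separated; the union over `k`
  has measure `O(m (log v / v) (log u / u)²) = O((log u / u)²)` since `m log v ≤ v`.
* For `m - 1 ≤ k ≤ m + 1`, the two events `evt k u`, `evt n u` alone give `O((log u / u)²)`.
* For `k ≥ m + 2`, both events are separated from `A_m`, so that the measure is at most that of
  `A_m` times `O(n (log u / u)² + 1 / u)`, the second term coming from `k = n - 1`; and the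
  measure of `A_m` is bounded in the same way by `O(m (log v / v)² + 1 / v)`.
-/

open scoped ENNReal
open MeasureTheory Filter

/-- The Gauss map `T(x) = 1/x - ⌊1/x⌋`. -/
noncomputable def gaussMap (x : ℝ) : ℝ := 1 / x - ⌊1 / x⌋

/-- The `n`-th partial quotient `a_n(x) = ⌊1 / T^{n-1}(x)⌋` (for `n ≥ 1`). -/
noncomputable def pq (x : ℝ) (n : ℕ) : ℕ := ⌊1 / (gaussMap^[n - 1] x)⌋₊

/-- The set `F₂(φ)` of irrational `x ∈ (0,1)` such that for infinitely many `n` there are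
`1 ≤ k ≠ l ≤ n` with `a_k a_{k+1} ≥ φ(n)` and `a_l a_{l+1} ≥ φ(n)`. -/
def F2 (φ : ℕ → ℝ) : Set ℝ :=
  {x | x ∈ Set.Ioo (0 : ℝ) 1 ∧ Irrational x ∧
    {n : ℕ | ∃ k l : ℕ, 1 ≤ k ∧ k ≤ n ∧ 1 ≤ l ∧ l ≤ n ∧ k ≠ l ∧
      φ n ≤ (pq x k : ℝ) * (pq x (k + 1) : ℝ) ∧
      φ n ≤ (pq x l : ℝ) * (pq x (l + 1) : ℝ)}.Infinite}

/-- The cylinder `I_n(a_1,…,a_n)`: irrationals in `(0,1)` whose first `n` partial quotients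
are `a 1, …, a n`. -/
def cyl (n : ℕ) (a : ℕ → ℕ) : Set ℝ :=
  {x | x ∈ Set.Ioo (0 : ℝ) 1 ∧ Irrational x ∧ ∀ i : ℕ, 1 ≤ i → i ≤ n → pq x i = a i}

/-- The set `A_n(φ)` of irrational `x ∈ (0,1)` for which there is `1 ≤ k < n` with
`a_k a_{k+1} ≥ φ(n)` and `a_n a_{n+1} ≥ φ(n)`. -/
def Aset (φ : ℕ → ℝ) (n : ℕ) : Set ℝ :=
  {x | x ∈ Set.Ioo (0 : ℝ) 1 ∧ Irrational x ∧ ∃ k : ℕ, 1 ≤ k ∧ k < n ∧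
    φ n ≤ (pq x k : ℝ) * (pq x (k + 1) : ℝ) ∧
    φ n ≤ (pq x n : ℝ) * (pq x (n + 1) : ℝ)}


/-! ### Irrational points, the Gauss map and partial quotients -/

/-- The irrational points of `(0,1)`. -/
def irr01 : Set ℝ := {x | x ∈ Set.Ioo (0 : ℝ) 1 ∧ Irrational x}

/-- Lebesgue measure on `(0,1)`, carried by the irrationals. -/
noncomputable def lam : Measure ℝ := volume.restrict irr01

instance isFiniteMeasure_lam : IsFiniteMeasure lam := by
  refine ⟨?_⟩
  rw [lam, Measure.restrict_apply_univ]
  calc volume irr01 ≤ volume (Set.Ioo (0 : ℝ) 1) := measure_mono fun x hx => hx.1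
    _ < ⊤ := by simp

lemma measurableSet_irr01 : MeasurableSet irr01 := by
  have h : MeasurableSet {x : ℝ | Irrational x} :=
    (Set.countable_range ((↑) : ℚ → ℝ)).measurableSet.compl
  exact measurableSet_Ioo.inter h

lemma volume_irr01 : volume irr01 = 1 := by
  have h0 : volume (Set.range ((↑) : ℚ → ℝ)) = 0 := (Set.countable_range _).measure_zero _
  have h : irr01 = Set.Ioo (0 : ℝ) 1 \ Set.range ((↑) : ℚ → ℝ) := by
    ext x; simp [irr01, Irrational]
  rw [h, measure_sdiff_null h0]
  simp

lemma lam_apply_of_subset {s : Set ℝ} (h : s ⊆ irr01) : lam s = volume s :=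
  Measure.restrict_eq_self _ h

lemma lam_inter_irr01 (s : Set ℝ) : lam (s ∩ irr01) = lam s := by
  rw [lam, Measure.restrict_apply' measurableSet_irr01, Measure.restrict_apply' measurableSet_irr01,
    Set.inter_assoc, Set.inter_self]

lemma lam_le_volume (s : Set ℝ) : lam s ≤ volume s := Measure.restrict_le_self s

lemma gaussMap_mem {x : ℝ} (hx : x ∈ irr01) : gaussMap x ∈ irr01 := by
  have hirr : Irrational (gaussMap x) := by
    unfold gaussMap
    rw [one_div]
    exact (irrational_inv_iff.2 hx.2).sub_intCast _
  have h0 : 0 ≤ gaussMap x := Int.fract_nonneg (1 / x)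
  have h1 : gaussMap x < 1 := Int.fract_lt_one (1 / x)
  exact ⟨⟨lt_of_le_of_ne h0 (Ne.symm hirr.ne_zero), h1⟩, hirr⟩

lemma iterate_mem {x : ℝ} (hx : x ∈ irr01) (j : ℕ) : gaussMap^[j] x ∈ irr01 := by
  induction j with
  | zero => exact hx
  | succ j ih => rw [Function.iterate_succ_apply']; exact gaussMap_mem ih

lemma measurable_gaussMap : Measurable gaussMap := by
  unfold gaussMap
  have h : Measurable fun x : ℝ => 1 / x := by fun_prop
  exact h.sub (measurable_from_top.comp (Int.measurable_floor.comp h))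

lemma measurable_pq (i : ℕ) : Measurable fun x => pq x i := by
  unfold pq
  exact Nat.measurable_floor.comp
    (measurable_const.div (measurable_gaussMap.iterate _))

lemma pq_iterate (x : ℝ) (j : ℕ) {i : ℕ} (hi : 1 ≤ i) : pq (gaussMap^[j] x) i = pq x (j + i) := by
  unfold pq
  rw [← Function.iterate_add_apply]
  congr 4
  omega

lemma pq_one (x : ℝ) : pq x 1 = ⌊1 / x⌋₊ := rfl

/-- The inverse branch `y ↦ 1 / (a + y)` maps `B` onto the points of first digit `a` which the
Gauss map sends into `B`. -/
lemma branch_image {a : ℕ} (ha : 1 ≤ a) {B : Set ℝ} (hB : B ⊆ irr01) :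
    {x | x ∈ irr01 ∧ pq x 1 = a ∧ gaussMap x ∈ B} = (fun y : ℝ => 1 / ((a : ℝ) + y)) '' B := by
  have ha' : (1 : ℝ) ≤ a := by exact_mod_cast ha
  ext x
  constructor
  · rintro ⟨hx, hp, hxB⟩
    refine ⟨gaussMap x, hxB, ?_⟩
    have hx0 : 0 < 1 / x := one_div_pos.2 hx.1.1
    have h1 : (⌊1 / x⌋ : ℝ) = a := by
      rw [← hp, pq_one, ← natCast_floor_eq_intCast_floor hx0.le]
    have : (a : ℝ) + gaussMap x = 1 / x := by
      unfold gaussMap; rw [h1]; ring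
    simp only [this, one_div_one_div]
  · rintro ⟨y, hy, rfl⟩
    obtain ⟨⟨hy0, hy1⟩, hyi⟩ := hB hy
    have hfl : ⌊(a : ℝ) + y⌋ = (a : ℤ) := by
      rw [Int.floor_eq_iff]; push_cast; constructor <;> linarith
    have hpos : 0 < (a : ℝ) + y := by linarith
    refine ⟨⟨⟨by positivity, ?_⟩, ?_⟩, ?_, ?_⟩
    · rw [div_lt_one hpos]; linarith
    · simp only [one_div]; exact irrational_inv_iff.2 (hyi.natCast_add a)
    · rw [pq_one, one_div_one_div, Nat.floor_eq_iff hpos.le]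
      constructor <;> linarith
    · simp only [gaussMap, one_div_one_div, hfl]
      simpa using hy

/-! ### Distribution of the tail on a cylinder -/

/-- The density `1 / (1 + s y)²`; up to a constant factor it is the density of `T^j x` for `x`
uniform on a cylinder of rank `j`, where `s` is the quotient `q_{j-1} / q_j` of denominators. -/
noncomputable def dens (s y : ℝ) : ℝ := 1 / (1 + s * y) ^ 2

lemma measurable_dens (s : ℝ) : Measurable fun y => ENNReal.ofReal (dens s y) := by
  unfold dens; fun_prop

/-- The family of densities `dens s`, `0 ≤ s ≤ 1`, is stable up to constants under restriction
to a first digit `a` followed by the Gauss map; the new parameter is `1 / (a + s)`. -/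
lemma lintegral_branch {a : ℕ} (ha : 1 ≤ a) {s : ℝ} (hs : 0 ≤ s) {B : Set ℝ} (hB : B ⊆ irr01)
    (hBm : MeasurableSet B) :
    ∫⁻ y in {x | x ∈ irr01 ∧ pq x 1 = a ∧ gaussMap x ∈ B}, ENNReal.ofReal (dens s y) =
      ENNReal.ofReal (1 / (a + s) ^ 2) * ∫⁻ y in B, ENNReal.ofReal (dens (1 / (a + s)) y) := by
  have ha' : (1 : ℝ) ≤ a := by exact_mod_cast ha
  rw [branch_image ha hB]
  rw [lintegral_image_eq_lintegral_abs_deriv_mul (f' := fun y => -1 / ((a : ℝ) + y) ^ 2) hBm]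
  · rw [← lintegral_const_mul _ (measurable_dens _)]
    refine setLIntegral_congr_fun hBm fun y hy => ?_
    obtain ⟨⟨hy0, hy1⟩, -⟩ := hB hy
    have hpos : 0 < (a : ℝ) + y := by linarith
    have hpos' : 0 < (a : ℝ) + s := by linarith
    have hpos2 : 0 < (a : ℝ) + y + s := by linarith
    rw [← ENNReal.ofReal_mul (abs_nonneg _), ← ENNReal.ofReal_mul (by positivity)]
    congr 1
    rw [neg_div, abs_neg, abs_of_nonneg (by positivity)]
    unfold dens
    have e1 : 1 + s * (1 / ((a : ℝ) + y)) = (a + y + s) / (a + y) := by field_simp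
    have e2 : 1 + 1 / ((a : ℝ) + s) * y = (a + y + s) / (a + s) := by field_simp; ring
    rw [e1, e2]
    field_simp
  · intro y hy
    obtain ⟨⟨hy0, hy1⟩, -⟩ := hB hy
    have hpos : (a : ℝ) + y ≠ 0 := by linarith
    have h : HasDerivAt (fun y : ℝ => (a : ℝ) + y) 1 y := (hasDerivAt_id y).const_add _
    simp only [one_div]
    exact (h.fun_inv hpos).hasDerivWithinAt
  · intro y hy z hz h
    obtain ⟨⟨hy0, hy1⟩, -⟩ := hB hy
    obtain ⟨⟨hz0, hz1⟩, -⟩ := hB hz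
    simp only [one_div, inv_inj] at h
    linarith

/-- On a cylinder of rank `j`, the law of `T^j x` is a multiple of some `dens s`. -/
lemma cyl_law (b : ℕ → ℕ) (j : ℕ) : ∃ (s : ℝ) (c : ℝ≥0∞), 0 ≤ s ∧ s ≤ 1 ∧
    ∀ B : Set ℝ, B ⊆ irr01 → MeasurableSet B →
      volume (cyl j b ∩ gaussMap^[j] ⁻¹' B) = c * ∫⁻ y in B, ENNReal.ofReal (dens s y) := by
  induction j with
  | zero =>
    refine ⟨0, 1, le_rfl, zero_le_one, fun B hB hBm => ?_⟩
    have : cyl 0 b ∩ gaussMap^[0] ⁻¹' B = B := by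
      ext x
      constructor
      · exact fun h => h.2
      · exact fun h => ⟨⟨(hB h).1, (hB h).2, fun i h1 h2 => by omega⟩, h⟩
    rw [this]
    simp [dens]
  | succ j ih =>
    obtain ⟨s, c, hs0, hs1, h⟩ := ih
    have key : ∀ B : Set ℝ, cyl (j + 1) b ∩ gaussMap^[j + 1] ⁻¹' B =
        cyl j b ∩ gaussMap^[j] ⁻¹' {x | x ∈ irr01 ∧ pq x 1 = b (j + 1) ∧ gaussMap x ∈ B} := by
      intro B
      ext x
      simp only [cyl, Set.mem_inter_iff, Set.mem_ofPred_eq, Set.mem_preimage,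
        Function.iterate_succ_apply', pq_iterate x j le_rfl]
      constructor
      · rintro ⟨⟨h1, h2, h3⟩, h4⟩
        exact ⟨⟨h1, h2, fun i hi hi' => h3 i hi (by omega)⟩, iterate_mem ⟨h1, h2⟩ j,
          h3 _ (by omega) le_rfl, h4⟩
      · rintro ⟨⟨h1, h2, h3⟩, -, h4, h5⟩
        refine ⟨⟨h1, h2, fun i hi hi' => ?_⟩, h5⟩
        rcases Nat.lt_or_ge j i with hij | hij
        · obtain rfl : i = j + 1 := by omega
          exact h4
        · exact h3 i hi hij
    have hm : ∀ B : Set ℝ, MeasurableSet B →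
        MeasurableSet {x | x ∈ irr01 ∧ pq x 1 = b (j + 1) ∧ gaussMap x ∈ B} := fun B hB =>
      measurableSet_irr01.inter
        ((measurable_pq 1 (measurableSet_singleton _)).inter (measurable_gaussMap hB))
    rcases Nat.eq_zero_or_pos (b (j + 1)) with h0 | hpos
    · refine ⟨0, 0, le_rfl, zero_le_one, fun B hB hBm => ?_⟩
      have hempty : {x | x ∈ irr01 ∧ pq x 1 = b (j + 1) ∧ gaussMap x ∈ B} = ∅ := by
        ext x
        simp only [Set.mem_ofPred_eq, Set.mem_empty_iff_false, iff_false]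
        rintro ⟨hx, hp, -⟩
        rw [h0, pq_one, Nat.floor_eq_zero, div_lt_one hx.1.1] at hp
        exact absurd hx.1.2 (not_lt.2 hp.le)
      rw [key, hempty]
      simp
    · have hpos' : (1 : ℝ) ≤ b (j + 1) := by exact_mod_cast hpos
      refine ⟨1 / (b (j + 1) + s), c * ENNReal.ofReal (1 / (b (j + 1) + s) ^ 2), by positivity,
        ?_, fun B hB hBm => ?_⟩
      · rw [div_le_one (by linarith)]; linarith
      · rw [key, h _ (fun x hx => hx.1) (hm B hBm), lintegral_branch hpos hs0 hB hBm, mul_assoc]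

/-- Bounded distortion: given a cylinder, `T^j x` has density at most `4`. -/
lemma cyl_quasi_indep (b : ℕ → ℕ) (j : ℕ) {B : Set ℝ} (hBm : MeasurableSet B) :
    lam (cyl j b ∩ gaussMap^[j] ⁻¹' B) ≤ 4 * lam (cyl j b) * lam B := by
  obtain ⟨s, c, hs0, hs1, h⟩ := cyl_law b j
  have hcyl : cyl j b ⊆ irr01 := fun x hx => ⟨hx.1, hx.2.1⟩
  have hle : lam (cyl j b ∩ gaussMap^[j] ⁻¹' B) ≤ c * lam B := by
    rw [lam_apply_of_subset (Set.inter_subset_left.trans hcyl)]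
    have : cyl j b ∩ gaussMap^[j] ⁻¹' B = cyl j b ∩ gaussMap^[j] ⁻¹' (B ∩ irr01) := by
      ext x
      exact ⟨fun hx => ⟨hx.1, hx.2, iterate_mem (hcyl hx.1) j⟩, fun hx => ⟨hx.1, hx.2.1⟩⟩
    rw [this, h _ Set.inter_subset_right (hBm.inter measurableSet_irr01), ← lam_inter_irr01 B,
      lam_apply_of_subset Set.inter_subset_right]
    gcongr
    calc ∫⁻ y in B ∩ irr01, ENNReal.ofReal (dens s y)
        ≤ ∫⁻ y in B ∩ irr01, 1 := by
          refine setLIntegral_mono measurable_const fun y hy => ?_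
          rw [← ENNReal.ofReal_one]
          apply ENNReal.ofReal_le_ofReal
          have := mul_nonneg hs0 hy.2.1.1.le
          unfold dens
          rw [div_le_one (by positivity)]
          nlinarith
      _ = volume (B ∩ irr01) := by simp
  have hge : c ≤ 4 * lam (cyl j b) := by
    have h1 := h irr01 le_rfl measurableSet_irr01
    have h2 : cyl j b ∩ gaussMap^[j] ⁻¹' irr01 = cyl j b :=
      Set.inter_eq_left.2 fun x hx => iterate_mem (hcyl hx) j
    rw [h2] at h1
    rw [lam_apply_of_subset hcyl, h1]
    have h3 : ENNReal.ofReal (1 / 4) ≤ ∫⁻ y in irr01, ENNReal.ofReal (dens s y) := by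
      calc ENNReal.ofReal (1 / 4) = ∫⁻ y in irr01, ENNReal.ofReal (1 / 4) := by
            simp [volume_irr01]
        _ ≤ _ := by
            refine setLIntegral_mono (measurable_dens s) fun y hy => ?_
            apply ENNReal.ofReal_le_ofReal
            have h4 := mul_nonneg hs0 hy.1.1.le
            have h5 : s * y ≤ 1 := mul_le_one₀ hs1 hy.1.1.le hy.1.2.le
            unfold dens
            apply one_div_le_one_div_of_le (by positivity)
            nlinarith
    have h4 : (1 : ℝ≥0∞) ≤ 4 * ∫⁻ y in irr01, ENNReal.ofReal (dens s y) := by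
      calc (1 : ℝ≥0∞) = 4 * ENNReal.ofReal (1 / 4) := by
            rw [show (4 : ℝ≥0∞) = ENNReal.ofReal 4 by simp, ← ENNReal.ofReal_mul (by norm_num)]
            norm_num
        _ ≤ _ := by gcongr
    calc c = c * 1 := (mul_one c).symm
      _ ≤ c * (4 * ∫⁻ y in irr01, ENNReal.ofReal (dens s y)) := by gcongr
      _ = _ := by ring
  exact hle.trans (by gcongr)

/-- `E` is determined (on the irrationals of `(0,1)`) by the first `j` partial quotients. -/
def DetBy (j : ℕ) (E : Set ℝ) : Prop :=
  ∀ x ∈ irr01, ∀ y ∈ irr01, (∀ i, 1 ≤ i → i ≤ j → pq x i = pq y i) → x ∈ E → y ∈ E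

lemma DetBy.mono {j k : ℕ} {E : Set ℝ} (h : DetBy j E) (hjk : j ≤ k) : DetBy k E :=
  fun x hx y hy hxy => h x hx y hy fun i h1 h2 => hxy i h1 (h2.trans hjk)

lemma DetBy.inter {j : ℕ} {E F : Set ℝ} (hE : DetBy j E) (hF : DetBy j F) : DetBy j (E ∩ F) :=
  fun x hx y hy hxy h => ⟨hE x hx y hy hxy h.1, hF x hx y hy hxy h.2⟩

lemma detBy_cyl (t : ℕ) (b : ℕ → ℕ) : DetBy t (cyl t b) :=
  fun _ _ _ hy hxy h => ⟨hy.1, hy.2, fun i h1 h2 => (hxy i h1 h2) ▸ h.2.2 i h1 h2⟩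

/-- Quasi-independence of the first `j` digits and the `j`-th tail: sum of `cyl_quasi_indep` over
the cylinders of rank `j` contained in `E`. -/
lemma quasi_indep {j : ℕ} {E B : Set ℝ} (hE : DetBy j E) (hBm : MeasurableSet B) :
    lam.real (E ∩ gaussMap^[j] ⁻¹' B) ≤ 4 * lam.real E * lam.real B := by
  let W : ℝ → (Fin j → ℕ) := fun x i => pq x (i + 1)
  have hW : Measurable W := measurable_pi_lambda _ fun i => measurable_pq _
  have hsum : ∀ F : Set ℝ, lam F = ∑' w : Fin j → ℕ, lam (W ⁻¹' {w} ∩ F) := by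
    intro F
    have h := measure_iUnion (μ := lam.restrict F) (f := fun w : Fin j → ℕ => W ⁻¹' {w})
      (fun w w' hww => Set.disjoint_left.2 fun x hx hx' => hww (hx.symm.trans hx'))
      (fun w => hW (measurableSet_singleton w))
    have hu : (⋃ w : Fin j → ℕ, W ⁻¹' {w}) = Set.univ :=
      Set.eq_univ_of_forall fun x => Set.mem_iUnion.2 ⟨W x, rfl⟩
    rw [hu, Measure.restrict_apply_univ] at h
    rw [h]
    exact tsum_congr fun w => Measure.restrict_apply (hW (measurableSet_singleton w))
  have hen : lam (E ∩ gaussMap^[j] ⁻¹' B) ≤ 4 * lam E * lam B := by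
    rw [hsum (E ∩ _), hsum E, ← ENNReal.tsum_mul_left, ← ENNReal.tsum_mul_right]
    refine ENNReal.tsum_le_tsum fun w => ?_
    by_cases hex : ∃ x ∈ irr01, x ∈ E ∧ W x = w
    · obtain ⟨x, hx, hxE, hxw⟩ := hex
      have hWc : ∀ y ∈ irr01, (y ∈ W ⁻¹' {w} ∩ E ↔ y ∈ cyl j (pq x)) := by
        intro y hy
        constructor
        · rintro ⟨h1, -⟩
          refine ⟨hy.1, hy.2, fun i hi hi' => ?_⟩
          have := congrFun ((show W y = w from h1).trans hxw.symm) ⟨i - 1, by omega⟩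
          simpa [W, Nat.sub_add_cancel hi] using this
        · rintro ⟨-, -, h3⟩
          refine ⟨?_, hE x hx y hy (fun i h1 h2 => (h3 i h1 h2).symm) hxE⟩
          rw [← hxw]
          funext i
          exact h3 _ (by omega) (by omega)
      have e1 : lam (W ⁻¹' {w} ∩ E) = lam (cyl j (pq x)) := by
        rw [← lam_inter_irr01, ← lam_inter_irr01 (cyl _ _)]
        congr 1
        ext y
        exact ⟨fun h => ⟨(hWc y h.2).1 h.1, h.2⟩, fun h => ⟨(hWc y h.2).2 h.1, h.2⟩⟩
      have e2 : lam (W ⁻¹' {w} ∩ (E ∩ gaussMap^[j] ⁻¹' B)) =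
          lam (cyl j (pq x) ∩ gaussMap^[j] ⁻¹' B) := by
        rw [← lam_inter_irr01, ← lam_inter_irr01 (cyl _ _ ∩ _)]
        congr 1
        ext y
        exact ⟨fun h => ⟨⟨(hWc y h.2).1 ⟨h.1.1, h.1.2.1⟩, h.1.2.2⟩, h.2⟩,
          fun h => ⟨⟨((hWc y h.2).2 h.1.1).1, ((hWc y h.2).2 h.1.1).2, h.1.2⟩, h.2⟩⟩
      rw [e1, e2]
      exact cyl_quasi_indep _ j hBm
    · have : lam (W ⁻¹' {w} ∩ (E ∩ gaussMap^[j] ⁻¹' B)) = 0 := by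
        rw [← lam_inter_irr01]
        convert measure_empty (μ := lam)
        ext y
        simp only [Set.mem_empty_iff_false, iff_false]
        exact fun h => hex ⟨y, h.2, h.1.2.1, h.1.1⟩
      rw [this]
      exact zero_le
  have := ENNReal.toReal_mono (by finiteness) hen
  simpa [Measure.real, ENNReal.toReal_mul] using this

/-! ### Measures of the digit events -/

/-- The event `a_k a_{k+1} ≥ u`. -/
def evt (k : ℕ) (u : ℝ) : Set ℝ := {x | u ≤ (pq x k : ℝ) * (pq x (k + 1) : ℝ)}

lemma measurableSet_evt (k : ℕ) (u : ℝ) : MeasurableSet (evt k u) := by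
  have h : ∀ i, Measurable fun x => (pq x i : ℝ) := fun i =>
    measurable_from_top.comp (measurable_pq i)
  exact measurableSet_le measurable_const ((h k).mul (h (k + 1)))

lemma detBy_evt {k j : ℕ} (hk : 1 ≤ k) (hj : k + 1 ≤ j) (u : ℝ) : DetBy j (evt k u) := by
  intro x _ y _ hxy h
  have h1 := hxy k hk (by omega)
  have h2 := hxy (k + 1) (by omega) hj
  simp only [evt, Set.mem_ofPred_eq] at h ⊢
  rwa [← h1, ← h2]

lemma preimage_evt (j : ℕ) {k : ℕ} (hk : 1 ≤ k) (u : ℝ) :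
    gaussMap^[j] ⁻¹' evt k u = evt (j + k) u := by
  ext x
  simp only [evt, Set.mem_preimage, Set.mem_ofPred_eq, pq_iterate x j hk,
    pq_iterate x j (show 1 ≤ k + 1 by omega), add_assoc]

lemma measurableSet_digit_ge (c : ℝ) : MeasurableSet {x | c ≤ (pq x 1 : ℝ)} :=
  measurableSet_le measurable_const (measurable_from_top.comp (measurable_pq 1))

lemma measurableSet_digit_eq (a : ℕ) : MeasurableSet {x | pq x 1 = a} :=
  measurable_pq 1 (measurableSet_singleton a)

lemma lam_real_le_of_subset_Icc {E : Set ℝ} {p q : ℝ} (hpq : p ≤ q)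
    (h : E ∩ irr01 ⊆ Set.Icc p q) : lam.real E ≤ q - p := by
  have h1 : lam E ≤ ENNReal.ofReal (q - p) := by
    rw [← lam_inter_irr01, ← Real.volume_Icc]
    exact (lam_le_volume _).trans (measure_mono h)
  exact ENNReal.toReal_le_of_le_ofReal (by linarith) h1

lemma lam_digit_ge {c : ℝ} (hc : 0 < c) : lam.real {x | c ≤ (pq x 1 : ℝ)} ≤ 1 / c := by
  have := lam_real_le_of_subset_Icc (E := {x | c ≤ (pq x 1 : ℝ)}) (p := 0) (q := 1 / c)
    (by positivity) ?_
  · simpa using this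
  · rintro x ⟨hx, hxi⟩
    refine ⟨hxi.1.1.le, ?_⟩
    have h1 : (pq x 1 : ℝ) ≤ 1 / x := by
      rw [pq_one]; exact Nat.floor_le (one_div_pos.2 hxi.1.1).le
    exact (le_one_div hc hxi.1.1).1 (le_trans hx h1)

lemma lam_digit_eq {a : ℕ} (ha : 1 ≤ a) : lam.real {x | pq x 1 = a} ≤ 1 / (a : ℝ) ^ 2 := by
  have ha' : (1 : ℝ) ≤ a := by exact_mod_cast ha
  have := lam_real_le_of_subset_Icc (E := {x | pq x 1 = a}) (p := 1 / (a + 1)) (q := 1 / a)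
    (one_div_le_one_div_of_le (by linarith) (by linarith)) ?_
  · refine this.trans ?_
    rw [div_sub_div _ _ (by linarith) (by linarith)]
    rw [div_le_div_iff₀ (by positivity) (by positivity)]
    nlinarith
  · rintro x ⟨hx, hxi⟩
    have hx0 : 0 < 1 / x := one_div_pos.2 hxi.1.1
    obtain ⟨h1, h2⟩ := (Nat.floor_eq_iff hx0.le).1 hx
    exact ⟨(one_div_le (by linarith) hxi.1.1).2 h2.le, (le_one_div (by linarith) hxi.1.1).1 h1⟩

lemma detBy_digit_ge (c : ℝ) : DetBy 1 {x | c ≤ (pq x 1 : ℝ)} := by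
  intro x _ y _ hxy h
  have h1 := hxy 1 le_rfl le_rfl
  simp only [Set.mem_ofPred_eq] at h ⊢
  rwa [← h1]

lemma detBy_digit_eq {i : ℕ} (hi : 1 ≤ i) (a : ℕ) : DetBy i {x | pq x i = a} := by
  intro x _ y _ hxy h
  have h1 := hxy i hi le_rfl
  simp only [Set.mem_ofPred_eq] at h ⊢
  rwa [← h1]

/-- `a_1 a_2 ≥ u` has probability `O(log u / u)`: either `a_1 ≥ u`, or `a_1 = a` for some `a ≤ u`
and `a_2 ≥ u / a`, which contributes a harmonic sum. -/
lemma lam_evt_one {u : ℝ} (hu : 1 ≤ Real.log u) (hu0 : 1 ≤ u) :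
    lam.real (evt 1 u) ≤ 9 * (Real.log u / u) := by
  have hu' : 0 < u := by linarith
  have hsub : evt 1 u ⊆ {x | u ≤ (pq x 1 : ℝ)} ∪ ⋃ a ∈ Finset.Icc 1 ⌊u⌋₊,
      ({x | pq x 1 = a} ∩ gaussMap^[1] ⁻¹' {x | u / a ≤ (pq x 1 : ℝ)}) := by
    intro x hx
    simp only [evt, Set.mem_ofPred_eq] at hx
    by_cases h : u ≤ (pq x 1 : ℝ)
    · exact Or.inl h
    · right
      push Not at h
      have hpos : 0 < pq x 1 := by
        rcases Nat.eq_zero_or_pos (pq x 1) with h0 | h0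
        · rw [h0] at hx; simp at hx; linarith
        · exact h0
      have hpos' : (0 : ℝ) < pq x 1 := by exact_mod_cast hpos
      refine Set.mem_biUnion (x := pq x 1) (by simpa using ⟨hpos, Nat.le_floor h.le⟩) ⟨rfl, ?_⟩
      simp only [Set.mem_preimage, Set.mem_ofPred_eq, pq_iterate x 1 le_rfl]
      rw [div_le_iff₀ hpos', mul_comm]
      exact hx
  have hterm : ∀ a ∈ Finset.Icc 1 ⌊u⌋₊,
      lam.real ({x | pq x 1 = a} ∩ gaussMap^[1] ⁻¹' {x | u / a ≤ (pq x 1 : ℝ)}) ≤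
        4 / u * (a : ℝ)⁻¹ := by
    intro a ha
    have ha1 : 1 ≤ a := (Finset.mem_Icc.1 ha).1
    have ha' : (0 : ℝ) < a := by exact_mod_cast ha1
    calc _ ≤ 4 * lam.real {x | pq x 1 = a} * lam.real {x | u / a ≤ (pq x 1 : ℝ)} :=
          quasi_indep (detBy_digit_eq le_rfl a) (measurableSet_digit_ge _)
      _ ≤ 4 * (1 / (a : ℝ) ^ 2) * (1 / (u / a)) := by
          gcongr
          · exact lam_digit_eq ha1
          · exact lam_digit_ge (by positivity)
      _ = _ := by field_simp
  have hharm : ∑ a ∈ Finset.Icc 1 ⌊u⌋₊, (a : ℝ)⁻¹ ≤ 1 + Real.log u := by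
    have := harmonic_floor_le_one_add_log u hu0
    rw [harmonic_eq_sum_Icc] at this
    push_cast at this
    exact this
  calc lam.real (evt 1 u) ≤ _ := measureReal_mono hsub
    _ ≤ lam.real {x | u ≤ (pq x 1 : ℝ)} + lam.real (⋃ a ∈ Finset.Icc 1 ⌊u⌋₊,
      ({x | pq x 1 = a} ∩ gaussMap^[1] ⁻¹' {x | u / a ≤ (pq x 1 : ℝ)})) :=
        measureReal_union_le _ _
    _ ≤ 1 / u + ∑ a ∈ Finset.Icc 1 ⌊u⌋₊, 4 / u * (a : ℝ)⁻¹ := by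
        gcongr
        · exact lam_digit_ge hu'
        · exact (measureReal_biUnion_finset_le _ _).trans (Finset.sum_le_sum hterm)
    _ ≤ 1 / u + 4 / u * (1 + Real.log u) := by
        rw [← Finset.mul_sum]; gcongr
    _ = (5 + 4 * Real.log u) / u := by ring
    _ ≤ (9 * Real.log u) / u := by gcongr; linarith
    _ = _ := by ring

/-- Two consecutive large products share the digit `a_2`, so their joint probability is only
`O(1 / u)`: either `a_2 ≥ u`, or `a_2 = a ≤ u` and both `a_1` and `a_3` are at least `u / a`. -/
lemma lam_evt_one_two {u : ℝ} (hu0 : 1 ≤ u) :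
    lam.real (evt 1 u ∩ evt 2 u) ≤ 20 / u := by
  have hu' : 0 < u := by linarith
  have hsub : evt 1 u ∩ evt 2 u ⊆
      (Set.univ ∩ gaussMap^[1] ⁻¹' {x | u ≤ (pq x 1 : ℝ)}) ∪ ⋃ a ∈ Finset.Icc 1 ⌊u⌋₊,
      (({x | u / a ≤ (pq x 1 : ℝ)} ∩ gaussMap^[1] ⁻¹' {x | pq x 1 = a}) ∩
        gaussMap^[2] ⁻¹' {x | u / a ≤ (pq x 1 : ℝ)}) := by
    rintro x ⟨hx, hx2⟩
    simp only [evt, Set.mem_ofPred_eq] at hx hx2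
    by_cases h : u ≤ (pq x 2 : ℝ)
    · left
      refine ⟨trivial, ?_⟩
      simpa only [Set.mem_preimage, Set.mem_ofPred_eq, pq_iterate x 1 le_rfl] using h
    · right
      push Not at h
      have hpos : 0 < pq x 2 := by
        rcases Nat.eq_zero_or_pos (pq x 2) with h0 | h0
        · rw [h0] at hx2; simp at hx2; linarith
        · exact h0
      have hpos' : (0 : ℝ) < pq x 2 := by exact_mod_cast hpos
      refine Set.mem_biUnion (x := pq x 2) (by simpa using ⟨hpos, Nat.le_floor h.le⟩)
        ⟨⟨?_, ?_⟩, ?_⟩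
      · simp only [Set.mem_ofPred_eq]
        rw [div_le_iff₀ hpos']
        exact hx
      · simp only [Set.mem_preimage, Set.mem_ofPred_eq, pq_iterate x 1 le_rfl]
      · simp only [Set.mem_preimage, Set.mem_ofPred_eq, pq_iterate x 2 le_rfl]
        rw [div_le_iff₀ hpos', mul_comm]
        exact hx2
  have huniv : lam.real Set.univ ≤ 1 := by
    simp [lam, Measure.real, volume_irr01]
  have hterm : ∀ a ∈ Finset.Icc 1 ⌊u⌋₊,
      lam.real (({x | u / a ≤ (pq x 1 : ℝ)} ∩ gaussMap^[1] ⁻¹' {x | pq x 1 = a}) ∩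
        gaussMap^[2] ⁻¹' {x | u / a ≤ (pq x 1 : ℝ)}) ≤ 16 / u ^ 2 := by
    intro a ha
    have ha1 : 1 ≤ a := (Finset.mem_Icc.1 ha).1
    have ha' : (0 : ℝ) < a := by exact_mod_cast ha1
    have hdet : DetBy 2 ({x | u / a ≤ (pq x 1 : ℝ)} ∩ gaussMap^[1] ⁻¹' {x | pq x 1 = a}) := by
      refine ((detBy_digit_ge _).mono one_le_two).inter ?_
      have : gaussMap^[1] ⁻¹' {x | pq x 1 = a} = {x | pq x 2 = a} := by
        ext x
        simp only [Set.mem_preimage, Set.mem_ofPred_eq, pq_iterate x 1 le_rfl]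
      rw [this]
      exact detBy_digit_eq one_le_two a
    calc _ ≤ 4 * lam.real ({x | u / a ≤ (pq x 1 : ℝ)} ∩ gaussMap^[1] ⁻¹' {x | pq x 1 = a}) *
            lam.real {x | u / a ≤ (pq x 1 : ℝ)} :=
          quasi_indep hdet (measurableSet_digit_ge _)
      _ ≤ 4 * (4 * lam.real {x | u / a ≤ (pq x 1 : ℝ)} * lam.real {x | pq x 1 = a}) *
            lam.real {x | u / a ≤ (pq x 1 : ℝ)} := by
          gcongr
          exact quasi_indep (detBy_digit_ge _) (measurableSet_digit_eq a)
      _ ≤ 4 * (4 * (1 / (u / a)) * (1 / (a : ℝ) ^ 2)) * (1 / (u / a)) := by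
          gcongr
          · exact lam_digit_ge (by positivity)
          · exact lam_digit_eq ha1
          · exact lam_digit_ge (by positivity)
      _ = _ := by field_simp; norm_num
  calc _ ≤ _ := measureReal_mono hsub
    _ ≤ _ := measureReal_union_le _ _
    _ ≤ 4 * 1 * (1 / u) + ∑ a ∈ Finset.Icc 1 ⌊u⌋₊, 16 / u ^ 2 := by
        gcongr
        · calc _ ≤ 4 * lam.real Set.univ * lam.real {x | u ≤ (pq x 1 : ℝ)} :=
                quasi_indep (fun _ _ _ _ _ _ => trivial) (measurableSet_digit_ge _)
            _ ≤ _ := by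
                gcongr
                exact lam_digit_ge hu'
        · exact (measureReal_biUnion_finset_le _ _).trans (Finset.sum_le_sum hterm)
    _ = 4 / u + ⌊u⌋₊ * (16 / u ^ 2) := by simp; ring
    _ ≤ 4 / u + u * (16 / u ^ 2) := by
        gcongr
        exact Nat.floor_le hu'.le
    _ = 20 / u := by field_simp; norm_num

/-- A large product at positions beyond the digits determining `E` costs a factor
`O(log u / u)`. -/
lemma inter_evt_le {j k : ℕ} {E : Set ℝ} {u : ℝ} (hE : DetBy j E) (hjk : j < k)
    (hu : 1 ≤ Real.log u) (hu0 : 1 ≤ u) :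
    lam.real (E ∩ evt k u) ≤ 36 * (Real.log u / u) * lam.real E := by
  obtain ⟨i, rfl⟩ : ∃ i, k = i + 1 := ⟨k - 1, by omega⟩
  rw [← preimage_evt i le_rfl]
  have h := quasi_indep (hE.mono (show j ≤ i by omega)) (measurableSet_evt 1 u)
  have h2 := lam_evt_one hu hu0
  have h3 : 0 ≤ lam.real E := measureReal_nonneg
  nlinarith

lemma inter_evt_evt_succ_le {j k : ℕ} {E : Set ℝ} {u : ℝ} (hE : DetBy j E) (hjk : j < k)
    (hu0 : 1 ≤ u) :
    lam.real (E ∩ (evt k u ∩ evt (k + 1) u)) ≤ 80 / u * lam.real E := by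
  obtain ⟨i, rfl⟩ : ∃ i, k = i + 1 := ⟨k - 1, by omega⟩
  have e : evt (i + 1) u ∩ evt (i + 1 + 1) u = gaussMap^[i] ⁻¹' (evt 1 u ∩ evt 2 u) := by
    rw [Set.preimage_inter, preimage_evt i le_rfl, preimage_evt i one_le_two]
    rfl
  rw [e]
  have h := quasi_indep (hE.mono (show j ≤ i by omega))
    ((measurableSet_evt 1 u).inter (measurableSet_evt 2 u))
  have h2 := lam_evt_one_two hu0
  calc _ ≤ _ := h
    _ ≤ 4 * lam.real E * (20 / u) := by gcongr
    _ = _ := by ring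

/-- A large product at an arbitrary position costs a factor `O(log u / u)` relative to a fixed
cylinder, once `u` is large compared with the digits of the cylinder. -/
lemma cyl_inter_evt_le {t k : ℕ} {b : ℕ → ℕ} {u : ℝ} (hk : 1 ≤ k)
    (hu : 1 ≤ Real.log u) (hu0 : 1 ≤ u)
    (hb : ∀ i ≤ t, (b i : ℝ) ≤ Real.log u) (hbb : ∀ i ≤ t, (b i : ℝ) * b (i + 1) < u) :
    lam.real (cyl t b ∩ evt k u) ≤ 36 * (Real.log u / u) * lam.real (cyl t b) := by
  have hu' : 0 < u := by linarith
  rcases lt_trichotomy k t with h | rfl | h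
  · have : cyl t b ∩ evt k u = ∅ := by
      ext x
      simp only [Set.mem_empty_iff_false, iff_false]
      rintro ⟨⟨-, -, h1⟩, h2⟩
      have := hbb k h.le
      simp only [evt, Set.mem_ofPred_eq] at h2
      rw [h1 k hk h.le, h1 (k + 1) (by omega) h] at h2
      linarith
    rw [this, measureReal_empty]
    positivity
  · have hbk := hb k le_rfl
    rcases Nat.eq_zero_or_pos (b k) with h0 | hpos
    · have : cyl k b ∩ evt k u = ∅ := by
        ext x
        simp only [Set.mem_empty_iff_false, iff_false]
        rintro ⟨⟨-, -, h1⟩, h2⟩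
        simp only [evt, Set.mem_ofPred_eq] at h2
        rw [h1 k hk le_rfl, h0] at h2
        simp at h2
        linarith
      rw [this, measureReal_empty]
      positivity
    have hpos' : (0 : ℝ) < b k := by exact_mod_cast hpos
    have hsub : cyl k b ∩ evt k u ⊆
        cyl k b ∩ gaussMap^[k] ⁻¹' {x | u / b k ≤ (pq x 1 : ℝ)} := by
      rintro x ⟨h1, h2⟩
      refine ⟨h1, ?_⟩
      simp only [Set.mem_preimage, Set.mem_ofPred_eq, pq_iterate x k le_rfl]
      simp only [evt, Set.mem_ofPred_eq] at h2
      rw [h1.2.2 k hk le_rfl] at h2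
      rw [div_le_iff₀ hpos', mul_comm]
      exact h2
    calc _ ≤ _ := measureReal_mono hsub
      _ ≤ _ := quasi_indep (detBy_cyl k b) (measurableSet_digit_ge _)
      _ ≤ 4 * lam.real (cyl k b) * (1 / (u / b k)) := by
          gcongr
          exact lam_digit_ge (by positivity)
      _ = 4 * (b k / u) * lam.real (cyl k b) := by field_simp
      _ ≤ 36 * (Real.log u / u) * lam.real (cyl k b) := by
          gcongr
          norm_num
  · exact inter_evt_le (detBy_cyl t b) h hu hu0

/-! ### The sets `A_n(φ)` -/

/-- The threshold `u` is large relative to the digits of the cylinder `cyl t b`. -/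
def Large (t : ℕ) (b : ℕ → ℕ) (u : ℝ) : Prop :=
  1 ≤ Real.log u ∧ 1 ≤ u ∧ (∀ i ≤ t, (b i : ℝ) ≤ Real.log u) ∧
    ∀ i ≤ t, (b i : ℝ) * b (i + 1) < u

lemma eventually_large (t : ℕ) (b : ℕ → ℕ) : ∀ᶠ u in atTop, Large t b u := by
  have h1 : ∀ i : ℕ, ∀ᶠ u in atTop, (b i : ℝ) ≤ Real.log u := fun i =>
    Real.tendsto_log_atTop.eventually_ge_atTop _
  have h2 : ∀ i : ℕ, ∀ᶠ u : ℝ in atTop, (b i : ℝ) * b (i + 1) < u := fun i =>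
    eventually_gt_atTop _
  refine (Real.tendsto_log_atTop.eventually_ge_atTop 1).and ((eventually_ge_atTop 1).and
    (Eventually.and ?_ ?_))
  · exact (Set.finite_Iic t).eventually_all.2 fun i _ => h1 i
  · exact (Set.finite_Iic t).eventually_all.2 fun i _ => h2 i

/-- Two large products at separated positions are quasi-independent. -/
lemma cyl_inter_evt_evt_le {t k n : ℕ} {b : ℕ → ℕ} {u : ℝ} (hu : Large t b u) (hk : 1 ≤ k)
    (hkn : k + 1 < n) (htn : t < n) :
    lam.real (cyl t b ∩ evt k u ∩ evt n u) ≤ 1296 * (Real.log u / u) ^ 2 * lam.real (cyl t b) := by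
  obtain ⟨h1, h2, h3, h4⟩ := hu
  have hu0 : 0 < u := by linarith
  have hdet : DetBy (n - 1) (cyl t b ∩ evt k u) :=
    ((detBy_cyl t b).mono (by omega)).inter (detBy_evt hk (by omega) u)
  calc _ ≤ 36 * (Real.log u / u) * lam.real (cyl t b ∩ evt k u) :=
        inter_evt_le hdet (by omega) h1 h2
    _ ≤ 36 * (Real.log u / u) * (36 * (Real.log u / u) * lam.real (cyl t b)) := by
        gcongr
        exact cyl_inter_evt_le hk h1 h2 h3 h4
    _ = _ := by ring

lemma detBy_Aset (φ : ℕ → ℝ) (m : ℕ) : DetBy (m + 1) (Aset φ m) := by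
  rintro x hx y hy hxy ⟨-, -, k, hk, hkm, h1, h2⟩
  refine ⟨hy.1, hy.2, k, hk, hkm, ?_, ?_⟩
  · rwa [← hxy k hk (by omega), ← hxy (k + 1) (by omega) (by omega)]
  · rwa [← hxy m (by omega) (by omega), ← hxy (m + 1) (by omega) le_rfl]

/-- The measure of a single `A_m(φ)` relative to a cylinder. -/
lemma cyl_inter_Aset_le {φ : ℕ → ℝ} {t m : ℕ} {b : ℕ → ℕ} (hv : Large t b (φ m))
    (htm : t + 2 ≤ m) :
    lam.real (cyl t b ∩ Aset φ m) ≤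
      (1296 * (m * (Real.log (φ m) / φ m) ^ 2) + 80 / φ m) * lam.real (cyl t b) := by
  set v := φ m with hv_def
  have hv1 : 1 ≤ v := hv.2.1
  have hsub : cyl t b ∩ Aset φ m ⊆ (⋃ l ∈ Finset.Icc 1 (m - 2), (cyl t b ∩ evt l v ∩ evt m v)) ∪
      (cyl t b ∩ (evt (m - 1) v ∩ evt (m - 1 + 1) v)) := by
    rintro x ⟨hx, -, -, l, hl, hlm, h1, h2⟩
    rcases Nat.lt_or_ge l (m - 1) with h | h
    · exact Or.inl (Set.mem_biUnion (x := l) (by simp; omega) ⟨⟨hx, h1⟩, h2⟩)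
    · obtain rfl : l = m - 1 := by omega
      refine Or.inr ⟨hx, h1, ?_⟩
      rw [Nat.sub_add_cancel (by omega)]
      exact h2
  have hcard : ((m - 2 : ℕ) : ℝ) ≤ m := by exact_mod_cast Nat.sub_le m 2
  calc _ ≤ _ := measureReal_mono hsub
    _ ≤ _ := measureReal_union_le _ _
    _ ≤ ∑ l ∈ Finset.Icc 1 (m - 2), 1296 * (Real.log v / v) ^ 2 * lam.real (cyl t b) +
        80 / v * lam.real (cyl t b) := by
        gcongr
        · refine (measureReal_biUnion_finset_le _ _).trans (Finset.sum_le_sum fun l hl => ?_)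
          rw [Finset.mem_Icc] at hl
          exact cyl_inter_evt_evt_le hv hl.1 (by omega) (by omega)
        · exact inter_evt_evt_succ_le (detBy_cyl t b) (by omega) hv1
    _ = (m - 2 : ℕ) * (1296 * (Real.log v / v) ^ 2 * lam.real (cyl t b)) +
        80 / v * lam.real (cyl t b) := by simp
    _ ≤ m * (1296 * (Real.log v / v) ^ 2 * lam.real (cyl t b)) +
        80 / v * lam.real (cyl t b) := by gcongr
    _ = _ := by ring

/-- The two-set bound, by the position `k` of the first large product of `A_n(φ)` relative to `m`.
For `k ≤ m - 2` the loss of a factor `m` in the union bound is compensated by the event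
`a_m a_{m+1} ≥ φ(m)`, as `m log φ(m) / φ(m) ≤ 1`. -/
lemma cyl_inter_Aset_Aset_le {φ : ℕ → ℝ} {t m n : ℕ} {b : ℕ → ℕ} (hu : Large t b (φ n))
    (hv : Large t b (φ m)) (htm : t + 2 ≤ m) (hmn : m + 2 < n)
    (hbig : (m : ℝ) * Real.log (φ m) ≤ φ m) :
    lam.real (Aset φ n ∩ Aset φ m ∩ cyl t b) ≤
      (50544 * (Real.log (φ n) / φ n) ^ 2 +
        (1296 * (n * (Real.log (φ n) / φ n) ^ 2) + 80 / φ n) *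
        (1296 * (m * (Real.log (φ m) / φ m) ^ 2) + 80 / φ m)) * lam.real (cyl t b) := by
  have hAm := cyl_inter_Aset_le hv htm
  set u := φ n with hu_def
  set v := φ m with hv_def
  have hu1 : 1 ≤ u := hu.2.1
  have hv1 : 1 ≤ v := hv.2.1
  have hlu : 1 ≤ Real.log u := hu.1
  have hlv : 1 ≤ Real.log v := hv.1
  set I := cyl t b with hI
  set F := cyl t b ∩ Aset φ m with hF
  have hFdet : DetBy (m + 1) F := ((detBy_cyl t b).mono (by omega)).inter (detBy_Aset φ m)
  set U1 := ⋃ k ∈ Finset.Icc 1 (m - 2), (I ∩ evt k u ∩ evt m v ∩ evt n u)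
  set U2 := ⋃ k ∈ Finset.Icc (m - 1) (m + 1), (I ∩ evt k u ∩ evt n u)
  set U3 := ⋃ k ∈ Finset.Icc (m + 2) (n - 2), (F ∩ evt k u ∩ evt n u)
  set U4 := F ∩ (evt (n - 1) u ∩ evt (n - 1 + 1) u)
  have hsub : Aset φ n ∩ Aset φ m ∩ I ⊆ U1 ∪ (U2 ∪ (U3 ∪ U4)) := by
    rintro x ⟨⟨⟨-, -, k, hk, hkn, h1, h2⟩, hxm⟩, hx⟩
    have hvx : x ∈ evt m v := by
      obtain ⟨-, -, -, -, -, -, h⟩ := hxm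
      exact h
    rcases Nat.lt_or_ge k (m - 1) with h | h
    · exact Or.inl (Set.mem_biUnion (x := k) (by simp; omega) ⟨⟨⟨hx, h1⟩, hvx⟩, h2⟩)
    right
    rcases Nat.lt_or_ge k (m + 2) with h' | h'
    · exact Or.inl (Set.mem_biUnion (x := k) (by simp; omega) ⟨⟨hx, h1⟩, h2⟩)
    right
    rcases Nat.lt_or_ge k (n - 1) with h'' | h''
    · exact Or.inl (Set.mem_biUnion (x := k) (by simp; omega) ⟨⟨⟨hx, hxm⟩, h1⟩, h2⟩)
    · obtain rfl : k = n - 1 := by omega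
      refine Or.inr ⟨⟨hx, hxm⟩, h1, ?_⟩
      rw [Nat.sub_add_cancel (by omega)]
      exact h2
  have hI0 : 0 ≤ lam.real I := measureReal_nonneg
  have b1 : lam.real U1 ≤ 46656 * (Real.log u / u) ^ 2 * lam.real I := by
    have hterm : ∀ k ∈ Finset.Icc 1 (m - 2), lam.real (I ∩ evt k u ∩ evt m v ∩ evt n u) ≤
        46656 * (Real.log u / u) ^ 2 * (Real.log v / v) * lam.real I := by
      intro k hk
      rw [Finset.mem_Icc] at hk
      have hd1 : DetBy (m - 1) (I ∩ evt k u) :=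
        ((detBy_cyl t b).mono (by omega)).inter (detBy_evt hk.1 (by omega) u)
      have hd2 : DetBy (m + 1) (I ∩ evt k u ∩ evt m v) :=
        (hd1.mono (by omega)).inter (detBy_evt (by omega) le_rfl v)
      calc _ ≤ 36 * (Real.log u / u) * lam.real (I ∩ evt k u ∩ evt m v) :=
            inter_evt_le hd2 (by omega) hlu hu1
        _ ≤ 36 * (Real.log u / u) * (36 * (Real.log v / v) * lam.real (I ∩ evt k u)) := by
            gcongr
            exact inter_evt_le hd1 (by omega) hlv hv1
        _ ≤ 36 * (Real.log u / u) * (36 * (Real.log v / v) *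
              (36 * (Real.log u / u) * lam.real I)) := by
            gcongr
            exact cyl_inter_evt_le hk.1 hlu hu1 hu.2.2.1 hu.2.2.2
        _ = _ := by ring
    have hcard : ((m - 2 : ℕ) : ℝ) ≤ m := by exact_mod_cast Nat.sub_le m 2
    calc _ ≤ ∑ k ∈ Finset.Icc 1 (m - 2),
          46656 * (Real.log u / u) ^ 2 * (Real.log v / v) * lam.real I :=
          (measureReal_biUnion_finset_le _ _).trans (Finset.sum_le_sum hterm)
      _ = (m - 2 : ℕ) * (46656 * (Real.log u / u) ^ 2 * (Real.log v / v) * lam.real I) := by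
          simp
      _ ≤ m * (46656 * (Real.log u / u) ^ 2 * (Real.log v / v) * lam.real I) := by gcongr
      _ = 46656 * (Real.log u / u) ^ 2 * lam.real I * (m * Real.log v / v) := by ring
      _ ≤ 46656 * (Real.log u / u) ^ 2 * lam.real I * 1 := by
          gcongr
          exact (div_le_one (by linarith)).2 hbig
      _ = _ := by ring
  have b2 : lam.real U2 ≤ 3888 * (Real.log u / u) ^ 2 * lam.real I := by
    calc _ ≤ ∑ k ∈ Finset.Icc (m - 1) (m + 1), 1296 * (Real.log u / u) ^ 2 * lam.real I := by
          refine (measureReal_biUnion_finset_le _ _).trans (Finset.sum_le_sum fun k hk => ?_)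
          rw [Finset.mem_Icc] at hk
          exact cyl_inter_evt_evt_le hu (by omega) (by omega) (by omega)
      _ = _ := by
          rw [Finset.sum_const, Nat.card_Icc, show m + 1 + 1 - (m - 1) = 3 by omega]
          simp only [nsmul_eq_mul]
          push_cast
          ring
  have b3 : lam.real U3 ≤ 1296 * (n * (Real.log u / u) ^ 2) * lam.real F := by
    have hterm : ∀ k ∈ Finset.Icc (m + 2) (n - 2), lam.real (F ∩ evt k u ∩ evt n u) ≤
        1296 * (Real.log u / u) ^ 2 * lam.real F := by
      intro k hk
      rw [Finset.mem_Icc] at hk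
      have hd : DetBy (k + 1) (F ∩ evt k u) :=
        (hFdet.mono (by omega)).inter (detBy_evt (by omega) le_rfl u)
      calc _ ≤ 36 * (Real.log u / u) * lam.real (F ∩ evt k u) :=
            inter_evt_le hd (by omega) hlu hu1
        _ ≤ 36 * (Real.log u / u) * (36 * (Real.log u / u) * lam.real F) := by
            gcongr
            exact inter_evt_le hFdet (by omega) hlu hu1
        _ = _ := by ring
    have hcard : ((n - 2 + 1 - (m + 2) : ℕ) : ℝ) ≤ n := by
      exact_mod_cast (show n - 2 + 1 - (m + 2) ≤ n by omega)
    calc _ ≤ ∑ k ∈ Finset.Icc (m + 2) (n - 2), 1296 * (Real.log u / u) ^ 2 * lam.real F :=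
          (measureReal_biUnion_finset_le _ _).trans (Finset.sum_le_sum hterm)
      _ = (n - 2 + 1 - (m + 2) : ℕ) * (1296 * (Real.log u / u) ^ 2 * lam.real F) := by
          rw [Finset.sum_const, Nat.card_Icc, nsmul_eq_mul]
      _ ≤ n * (1296 * (Real.log u / u) ^ 2 * lam.real F) := by gcongr
      _ = _ := by ring
  have b4 : lam.real U4 ≤ 80 / u * lam.real F :=
    inter_evt_evt_succ_le hFdet (by omega) hu1
  calc _ ≤ _ := measureReal_mono hsub
    _ ≤ lam.real U1 + (lam.real U2 + (lam.real U3 + lam.real U4)) := by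
        refine (measureReal_union_le _ _).trans (add_le_add le_rfl ?_)
        refine (measureReal_union_le _ _).trans (add_le_add le_rfl ?_)
        exact measureReal_union_le _ _
    _ ≤ 50544 * (Real.log u / u) ^ 2 * lam.real I +
        (1296 * (n * (Real.log u / u) ^ 2) + 80 / u) * lam.real F := by linarith
    _ ≤ 50544 * (Real.log u / u) ^ 2 * lam.real I +
        (1296 * (n * (Real.log u / u) ^ 2) + 80 / u) *
        ((1296 * (m * (Real.log v / v) ^ 2) + 80 / v) * lam.real I) := by gcongr
    _ = _ := by ring

theorem measure_Aset_inter_Aset_inter_cyl_upper (φ : ℕ → ℝ) (hpos : ∀ n, 0 < φ n)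
    (hmono : Monotone φ) (htends : Filter.Tendsto φ Filter.atTop Filter.atTop)
    (hbig : ∀ n : ℕ, 1 ≤ n → (n : ℝ) * Real.log (φ n) ≤ φ n) :
    ∃ C : ℝ, 0 < C ∧ ∀ t : ℕ, ∀ b : ℕ → ℕ, (∀ i : ℕ, 1 ≤ i → i ≤ t → 1 ≤ b i) →
      ∃ N : ℕ, ∀ m n : ℕ, N ≤ m → N ≤ n → m + 2 < n →
        volume (Aset φ n ∩ Aset φ m ∩ cyl t b) ≤
          ENNReal.ofReal (C * (Real.log (φ n) ^ 2 / φ n ^ 2 +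
            ((n : ℝ) * Real.log (φ n) ^ 2 / φ n ^ 2 + 1 / φ n) *
            ((m : ℝ) * Real.log (φ m) ^ 2 / φ m ^ 2 + 1 / φ m))) * volume (cyl t b) := by
  refine ⟨1296 ^ 2, by norm_num, fun t b _ => ?_⟩
  obtain ⟨N₀, hN₀⟩ := eventually_atTop.1 (htends.eventually (eventually_large t b))
  refine ⟨max N₀ (t + 2), fun m n hm hn hmn => ?_⟩
  have hu := hN₀ n (le_trans (le_max_left _ _) hn)
  have hv := hN₀ m (le_trans (le_max_left _ _) hm)
  have htm : t + 2 ≤ m := le_trans (le_max_right _ _) hm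
  have key := cyl_inter_Aset_Aset_le hu hv htm hmn (hbig m (by omega))
  have hcyl : cyl t b ⊆ irr01 := fun x hx => ⟨hx.1, hx.2.1⟩
  have hun : 0 < φ n := hpos n
  have hvm : 0 < φ m := hpos m
  rw [← lam_apply_of_subset hcyl, ← lam_apply_of_subset (Set.inter_subset_right.trans hcyl),
    ← ofReal_measureReal (μ := lam) (s := cyl t b), ← ENNReal.ofReal_mul (by positivity),
    ← ofReal_measureReal (μ := lam)]
  apply ENNReal.ofReal_le_ofReal
  refine key.trans ?_
  gcongr
  have e : ∀ i : ℕ, 1296 * (i * (Real.log (φ i) / φ i) ^ 2) + 80 / φ i ≤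
      1296 * (i * Real.log (φ i) ^ 2 / φ i ^ 2 + 1 / φ i) := by
    intro i
    have := hpos i
    have h80 : 80 / φ i ≤ 1296 * (1 / φ i) := by
      rw [mul_one_div]
      gcongr
      norm_num
    rw [div_pow, ← mul_div_assoc]
    linarith
  calc _ ≤ 1296 ^ 2 * (Real.log (φ n) ^ 2 / φ n ^ 2) +
        (1296 * (n * Real.log (φ n) ^ 2 / φ n ^ 2 + 1 / φ n)) *
        (1296 * (m * Real.log (φ m) ^ 2 / φ m ^ 2 + 1 / φ m)) := by
        rw [← div_pow (Real.log (φ n)) (φ n) 2]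
        gcongr
        · norm_num
        · exact e n
        · exact e m
    _ = _ := by ring
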